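/- arXiv:1710.00389 — 2 statements merged into one kernel-verified Lean document; each statement's English description precedes it below -/
import Mathlib

section
/- Let M be an N×m matrix over GF(2) that is a good syndrome pattern with witness w ∈ GF(2)^m, let sc_{j,a} := Σ_i a_i · M_{j,i} be its complete syndrome array, and let D : GF(2)^N → GF(2)^N be any columnwise decoder with D(0) = 0. Define the estimated complete syndrome bits by s̃_{j,a} := D(column a of sc)_j. Then for every block j the estimated complete syndrome row is valid, i.e., the map a ↦ s̃_{j,a} is additive: s̃_{j,a+b} = s̃_{j,a} + s̃_{j,b} for all a, b ∈ GF(2)^m. -/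
/-! In a good pattern every column of the complete syndrome array is `(a ⬝ᵥ w) • e`, where `e` is
the indicator vector of the blocks with a nonzero row. So a column is either `0` or `e`, and since
`D 0 = 0` the decoder acts on such columns by `D (c • e) = c • D e`. Each estimated bit is therefore
`(a ⬝ᵥ w) * D e j`, which is additive in `a`. -/

/-- Over `ZMod 2` the only scalars are `0` and `1`, so a zero-preserving map commutes with
scalar multiplication. -/
lemma decoder_smul {N : ℕ} (D : (Fin N → ZMod 2) → (Fin N → ZMod 2)) (hD : D 0 = 0)
    (c : ZMod 2) (e : Fin N → ZMod 2) : D (c • e) = c • D e := by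
  have hc : c = 0 ∨ c = 1 := by
    revert c
    decide
  rcases hc with rfl | rfl
  · simp [hD]
  · simp

lemma good_pattern_column {N m : ℕ} (M : Matrix (Fin N) (Fin m) (ZMod 2)) (w : Fin m → ZMod 2)
    (hgood : ∀ j : Fin N, M j = 0 ∨ M j = w) (a : Fin m → ZMod 2) :
    (fun j : Fin N => ∑ i : Fin m, a i * M j i) =
      (a ⬝ᵥ w) • (fun j : Fin N => if M j = 0 then (0 : ZMod 2) else 1) := by
  funext j
  by_cases h : M j = 0
  · simp [h]
  · have hw : M j = w := (hgood j).resolve_left h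
    have hw0 : w ≠ 0 := hw ▸ h
    simp [hw, hw0, dotProduct]

/-- **Lemma 4 of the paper.** Let `M` be a good syndrome pattern with
witness `w`, let `sc j a := ∑ i, a i * M j i` be its complete syndrome array, and let
`D : GF(2)^N → GF(2)^N` be any columnwise decoder with `D 0 = 0`. Define the estimated
complete syndrome bits `s̃ j a := (D (column a of sc)) j`. Then for every block `j`
the estimated complete syndrome row `a ↦ s̃ j a` is additive (valid). -/
theorem good_pattern_estimated_syndrome_valid
    {N m : ℕ} (M : Matrix (Fin N) (Fin m) (ZMod 2)) (w : Fin m → ZMod 2)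
    (hgood : ∀ j : Fin N, M j = 0 ∨ M j = w)
    (D : (Fin N → ZMod 2) → (Fin N → ZMod 2)) (hD : D 0 = 0) :
    ∀ (j : Fin N) (a b : Fin m → ZMod 2),
      D (fun j' : Fin N => ∑ i : Fin m, (a + b) i * M j' i) j =
        D (fun j' : Fin N => ∑ i : Fin m, a i * M j' i) j +
        D (fun j' : Fin N => ∑ i : Fin m, b i * M j' i) j := by
  intro j a b
  rw [good_pattern_column M w hgood (a + b), good_pattern_column M w hgood a,
    good_pattern_column M w hgood b]
  rw [decoder_smul D hD, decoder_smul D hD, decoder_smul D hD, add_dotProduct, add_smul,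
    Pi.add_apply]
end

section
/- Let D : GF(2)^N → GF(2)^N satisfy D(0) = 0, and let sc : {1,…,N} × GF(2)^m → GF(2) be any complete syndrome array, i.e., for each block j the map a ↦ sc_{j,a} is additive. Fix a block j₀ and define the estimated complete syndrome row s̃(a) := D(column a of sc)_{j₀}. If s̃ is additive (valid), then there exist w ∈ GF(2)^m and c ∈ GF(2)^N, where c is either the zero vector or equal to some column of sc, such that the good-pattern complete syndrome array scg_{j,a} := (Σ_i a_i w_i) · c_j satisfies D(column a of scg)_{j₀} = s̃(a) for every a ∈ GF(2)^m. In other words, one can always find a good syndrome pattern whose complete syndrome array generates exactly the same estimated complete syndromes for block j₀ under the same columnwise decoding. -/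
/-! An additive map `GF(2)^m → GF(2)` is linear, so the estimated row `s̃` has the form
`a ↦ ∑ i, a i * w i`. If `s̃ a₀ = 1` for some `a₀`, take `c` to be column `a₀`: column `a` of the
good pattern is then `0` where `s̃ a = 0`, and column `a₀` where `s̃ a = 1`, and the decoder
returns `0`, respectively `s̃ a₀ = 1`, on block `j₀`. If `s̃` vanishes identically, `c = 0` works. -/

/-- **constructive core of Lemma 5 of the paper.** Let `D` be a
columnwise decoder with `D 0 = 0`, and let `sc` be a complete syndrome array (each row
`a ↦ sc j a` is additive). Fix a block `j₀` and define the estimated complete syndrome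
row `s̃ a := (D (column a of sc)) j₀`. If `s̃` is additive (valid), then there exist
`w ∈ GF(2)^m` and `c ∈ GF(2)^N`, with `c` either the zero vector or a column of `sc`,
such that the good-pattern complete syndrome array `scg j a := (∑ i, a i * w i) * c j`
yields exactly the same estimates on block `j₀`: `(D (column a of scg)) j₀ = s̃ a`
for every `a`. -/
theorem valid_estimate_realized_by_good_pattern
    {N m : ℕ} (D : (Fin N → ZMod 2) → (Fin N → ZMod 2)) (hD : D 0 = 0)
    (sc : Fin N → (Fin m → ZMod 2) → ZMod 2)
    (hsc : ∀ (j : Fin N) (a b : Fin m → ZMod 2), sc j (a + b) = sc j a + sc j b)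
    (j₀ : Fin N)
    (hvalid : ∀ a b : Fin m → ZMod 2,
      D (fun j : Fin N => sc j (a + b)) j₀ =
        D (fun j : Fin N => sc j a) j₀ + D (fun j : Fin N => sc j b) j₀) :
    ∃ (w : Fin m → ZMod 2) (c : Fin N → ZMod 2),
      (c = 0 ∨ ∃ a : Fin m → ZMod 2, c = fun j : Fin N => sc j a) ∧
      ∀ a : Fin m → ZMod 2,
        D (fun j : Fin N => (∑ i : Fin m, a i * w i) * c j) j₀ =
          D (fun j : Fin N => sc j a) j₀ := by
  let f : (Fin m → ZMod 2) →+ ZMod 2 :=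
    AddMonoidHom.mk' (fun a => D (fun j : Fin N => sc j a) j₀) hvalid
  -- The coordinates of `w` are the values of the estimated row on the standard basis.
  obtain ⟨w, hw⟩ : ∃ w : Fin m → ZMod 2, ∀ a, ∑ i, a i * w i = f a :=
    ⟨_, fun a => ((f.toZModLinearMap 2).pi_apply_eq_sum_univ a).symm⟩
  have zero_or_one : ∀ x : ZMod 2, x = 0 ∨ x = 1 := by decide
  by_cases h : ∃ a₀, f a₀ = 1
  · obtain ⟨a₀, ha₀⟩ := h
    refine ⟨w, fun j => sc j a₀, Or.inr ⟨a₀, rfl⟩, fun a => ?_⟩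
    rw [hw]
    change _ = f a
    rcases zero_or_one (f a) with ha | ha
    · simp only [ha, zero_mul]
      exact congrFun hD j₀
    · simp only [ha, one_mul]
      exact ha₀
  · refine ⟨w, 0, Or.inl rfl, fun a => ?_⟩
    have ha : f a = 0 := (zero_or_one (f a)).resolve_right fun ha => h ⟨a, ha⟩
    change _ = f a
    simp only [Pi.zero_apply, mul_zero, ha]
    exact congrFun hD j₀
end
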